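/- Let G be a simple graph on n vertices with domination number γ, where 2 ≤ γ ≤ n−1. If the Laplacian spectral radius of G equals n − γ + 2 (i.e., n − γ + 2 is an eigenvalue of L(G)), then G has at least γ − 2 isolated vertices (vertices of degree zero). -/

import Mathlib

open SimpleGraph Matrix

/-- `S` is a dominating set of `G`: every vertex outside `S` has a neighbor in `S`. -/
def IsDominatingSet {V : Type*} (G : SimpleGraph V) (S : Set V) : Prop :=
  ∀ v : V, v ∉ S → ∃ u ∈ S, G.Adj u v

/-- The domination number of a finite graph: the minimum cardinality of a dominating set. -/
noncomputable def dominationNumber {V : Type*} [Fintype V] (G : SimpleGraph V) : ℕ :=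
  sInf {k : ℕ | ∃ S : Finset V, S.card = k ∧ IsDominatingSet G (S : Set V)}

/-!
Let `μ = n - γ + 2`, let `L x = μ x` with `x ≠ 0`, and let `u ~ v` be an edge on which the drop
`x u - x v` is largest. Comparing the eigenvalue equations at `u` and `v` gives
`μ ≤ |N(u) ∪ N(v)|`, while `u` and `v` together with the set `W` of vertices adjacent to neither of
them dominate `G`, so that `γ ≤ |W| + 2`. For this `μ` both inequalities are equalities: hence
`|W| = γ - 2`, and `x` is constantly `x v` on `N(u) \ N(v)` and `x u` on `N(v) \ N(u)`.

This produces further edges of largest drop, to which the same conclusions apply. Playing them off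
against one another shows that a vertex of `W` with a neighbor would either yield a dominating set
of size `γ - 1` or force `x u = x v`; thus all of `W` is isolated.
-/

section Domination

variable {V : Type*} [Fintype V] {G : SimpleGraph V}

theorem dominationNumber_le_card {S : Finset V} (hS : IsDominatingSet G (S : Set V)) :
    dominationNumber G ≤ S.card :=
  Nat.sInf_le ⟨S, rfl, hS⟩

theorem dominationNumber_le_card_add_two {p q : V} {T : Finset V}
    (hT : ∀ y ∉ T, G.Adj p y ∨ G.Adj q y ∨ ∃ t ∈ T, G.Adj t y) :
    dominationNumber G ≤ T.card + 2 := by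
  classical
  have hdom : IsDominatingSet G ((insert p (insert q T) : Finset V) : Set V) := by
    intro y hy
    simp only [Finset.coe_insert, Set.mem_insert_iff, Finset.mem_coe, not_or] at hy
    rcases hT y hy.2.2 with hpy | hqy | ⟨t, ht, hty⟩
    · exact ⟨p, by simp, hpy⟩
    · exact ⟨q, by simp, hqy⟩
    · exact ⟨t, by simp [ht], hty⟩
  calc dominationNumber G ≤ (insert p (insert q T)).card := dominationNumber_le_card hdom
    _ ≤ (insert q T).card + 1 := Finset.card_insert_le _ _
    _ ≤ T.card + 2 := Nat.succ_le_succ (Finset.card_insert_le _ _)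

variable [DecidableEq V] [DecidableRel G.Adj]

variable (G) in
/-- The set of vertices adjacent to neither `u` nor `v`. Together with `u` and `v` it dominates `G`;
adjacent `u` and `v` do not belong to it. -/
def commonNonneighborFinset (u v : V) : Finset V :=
  (G.neighborFinset u ∪ G.neighborFinset v)ᶜ

theorem mem_commonNonneighborFinset {u v y : V} :
    y ∈ commonNonneighborFinset G u v ↔ ¬G.Adj u y ∧ ¬G.Adj v y := by
  simp [commonNonneighborFinset]

theorem commonNonneighborFinset_comm (u v : V) :
    commonNonneighborFinset G u v = commonNonneighborFinset G v u := by
  rw [commonNonneighborFinset, Finset.union_comm, commonNonneighborFinset]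

theorem card_union_add_card_commonNonneighborFinset (u v : V) :
    (G.neighborFinset u ∪ G.neighborFinset v).card + (commonNonneighborFinset G u v).card =
      Fintype.card V :=
  Finset.card_add_card_compl _

theorem dominationNumber_le_card_commonNonneighborFinset_add_two (u v : V) :
    dominationNumber G ≤ (commonNonneighborFinset G u v).card + 2 := by
  refine dominationNumber_le_card_add_two (p := u) (q := v) fun y hy => ?_
  rw [mem_commonNonneighborFinset] at hy
  tauto

variable {u v r : V}

/-- The common form of the exchange arguments: `p`, `q` and the common nonneighbors of `u` and `v`
other than `r` would be too small a dominating set. -/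
theorem not_forall_dominated_of_card_add_two_le
    (hcard : (commonNonneighborFinset G u v).card + 2 ≤ dominationNumber G)
    (hr : r ∈ commonNonneighborFinset G u v) (p q : V) :
    ¬∀ y ∉ (commonNonneighborFinset G u v).erase r,
      G.Adj p y ∨ G.Adj q y ∨ ∃ t ∈ (commonNonneighborFinset G u v).erase r, G.Adj t y := by
  intro hdom
  have hle := dominationNumber_le_card_add_two hdom
  have herase := Finset.card_erase_add_one hr
  omega

theorem not_adj_of_mem_commonNonneighborFinset
    (hcard : (commonNonneighborFinset G u v).card + 2 ≤ dominationNumber G) {s : V}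
    (hr : r ∈ commonNonneighborFinset G u v) (hs : s ∈ commonNonneighborFinset G u v) :
    ¬G.Adj r s := by
  intro hrs
  refine not_forall_dominated_of_card_add_two_le hcard hr u v fun y hy => ?_
  by_cases hyr : y = r
  · subst hyr
    exact .inr (.inr ⟨s, Finset.mem_erase.2 ⟨hrs.ne', hs⟩, hrs.symm⟩)
  · rw [Finset.mem_erase, mem_commonNonneighborFinset] at hy
    tauto

theorem exists_adj_not_adj_not_adj
    (hcard : (commonNonneighborFinset G u v).card + 2 ≤ dominationNumber G) {w : V}
    (hr : r ∈ commonNonneighborFinset G u v) (hwr : G.Adj w r) :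
    ∃ b, G.Adj v b ∧ ¬G.Adj u b ∧ ¬G.Adj w b := by
  by_contra! hw
  refine not_forall_dominated_of_card_add_two_le hcard hr u w fun y hy => ?_
  by_cases hyr : y = r
  · exact .inr (.inl (hyr ▸ hwr))
  · rw [Finset.mem_erase, mem_commonNonneighborFinset] at hy
    have := hw y
    tauto

end Domination

section Laplacian

variable {V R : Type*} [Fintype V] [DecidableEq V] {G : SimpleGraph V} [DecidableRel G.Adj]

theorem lapMatrix_mulVec_apply_eq_sum_sub [NonAssocRing R] (x : V → R) (v : V) :
    (G.lapMatrix R *ᵥ x) v = ∑ y ∈ G.neighborFinset v, (x v - x y) := by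
  rw [lapMatrix_mulVec_apply, Finset.sum_sub_distrib, Finset.sum_const, nsmul_eq_mul,
    card_neighborFinset_eq_degree]

variable [CommRing R]

theorem card_mul_sub_sub_lapMatrix_mulVec (x : V → R) (u v : V) :
    ((G.neighborFinset u ∪ G.neighborFinset v).card : R) * (x u - x v) -
        ((G.lapMatrix R *ᵥ x) u - (G.lapMatrix R *ᵥ x) v) =
      ∑ y ∈ G.neighborFinset u \ G.neighborFinset v, (x y - x v) +
        ∑ y ∈ G.neighborFinset v \ G.neighborFinset u, (x u - x y) := by
  set A := G.neighborFinset u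
  set B := G.neighborFinset v
  have hcard : ((A ∪ B).card : R) = A.card + B.card - (A ∩ B).card := by
    rw [eq_sub_iff_add_eq]
    exact_mod_cast congrArg (Nat.cast (R := R)) (Finset.card_union_add_card_inter A B)
  have hA := Finset.sum_inter_add_sum_sdiff A B fun y => x y - x v
  have hB := Finset.sum_inter_add_sum_sdiff B A fun y => x u - x y
  rw [Finset.inter_comm] at hB
  rw [lapMatrix_mulVec_apply_eq_sum_sub, lapMatrix_mulVec_apply_eq_sum_sub, hcard]
  simp only [Finset.sum_sub_distrib, Finset.sum_const, nsmul_eq_mul] at hA hB ⊢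
  linear_combination -hA - hB

theorem card_sub_eigenvalue_mul_sub {x : V → R} {μ : R} (hx : G.lapMatrix R *ᵥ x = μ • x)
    {u v : V} :
    ((G.neighborFinset u ∪ G.neighborFinset v).card - μ) * (x u - x v) =
      ∑ y ∈ G.neighborFinset u \ G.neighborFinset v, (x y - x v) +
        ∑ y ∈ G.neighborFinset v \ G.neighborFinset u, (x u - x y) := by
  rw [← card_mul_sub_sub_lapMatrix_mulVec, hx, Pi.smul_apply, Pi.smul_apply, smul_eq_mul,
    smul_eq_mul]
  ring

theorem lapMatrix_mulVec_neg_eq_smul_neg {x : V → R} {μ : R} (hx : G.lapMatrix R *ᵥ x = μ • x) :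
    G.lapMatrix R *ᵥ (-x) = μ • -x := by
  rw [mulVec_neg, hx, smul_neg]

end Laplacian

/-- `u → v` is an oriented edge of `G` along which `x` drops the most, and this drop is required to
be positive. Such edges make the eigenvalue bound `IsSteepestEdge.eigenvalue_le_card_union` work. -/
structure IsSteepestEdge {V R : Type*} [Preorder R] [Sub R] (G : SimpleGraph V) (x : V → R)
    (u v : V) : Prop where
  adj : G.Adj u v
  lt : x v < x u
  sub_le : ∀ ⦃y z⦄, G.Adj y z → x y - x z ≤ x u - x v

namespace IsSteepestEdge

section Basic

variable {V R : Type*} {G : SimpleGraph V} {x : V → R} {u v : V}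

theorem congr [Sub R] [Preorder R] (h : IsSteepestEdge G x u v) {y z : V} (hyz : G.Adj y z)
    (hy : x y = x u) (hz : x z = x v) : IsSteepestEdge G x y z where
  adj := hyz
  lt := by simpa only [hy, hz] using h.lt
  sub_le := by simpa only [hy, hz] using h.sub_le

variable [AddCommGroup R] [PartialOrder R] [IsOrderedAddMonoid R]

theorem neg (h : IsSteepestEdge G x u v) : IsSteepestEdge G (-x) v u where
  adj := h.adj.symm
  lt := neg_lt_neg h.lt
  sub_le y z hyz := by simpa [neg_add_eq_sub] using h.sub_le hyz.symm

theorem apply_right_le (h : IsSteepestEdge G x u v) {y : V} (hy : G.Adj u y) : x v ≤ x y :=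
  (sub_le_sub_iff_left _).1 (h.sub_le hy)

theorem le_apply_left (h : IsSteepestEdge G x u v) {y : V} (hy : G.Adj v y) : x y ≤ x u :=
  (sub_le_sub_iff_right _).1 (h.sub_le hy.symm)

variable [Fintype V] [DecidableEq V] [DecidableRel G.Adj]

theorem sum_sdiff_sub_right_nonneg (h : IsSteepestEdge G x u v) :
    0 ≤ ∑ y ∈ G.neighborFinset u \ G.neighborFinset v, (x y - x v) := by
  refine Finset.sum_nonneg fun y hy => sub_nonneg.2 (h.apply_right_le ?_)
  exact (G.mem_neighborFinset u y).1 (Finset.mem_sdiff.1 hy).1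

theorem sum_sdiff_left_sub_nonneg (h : IsSteepestEdge G x u v) :
    0 ≤ ∑ y ∈ G.neighborFinset v \ G.neighborFinset u, (x u - x y) := by
  refine Finset.sum_nonneg fun y hy => sub_nonneg.2 (h.le_apply_left ?_)
  exact (G.mem_neighborFinset v y).1 (Finset.mem_sdiff.1 hy).1

end Basic

variable {V R : Type*} [Fintype V] [DecidableEq V] {G : SimpleGraph V} [DecidableRel G.Adj]
  [CommRing R] [LinearOrder R] [IsStrictOrderedRing R] {x : V → R} {u v : V}

theorem exists_of_lapMatrix_mulVec_ne_zero (hx : G.lapMatrix R *ᵥ x ≠ 0) :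
    ∃ u v, IsSteepestEdge G x u v := by
  obtain ⟨a, ha⟩ := Function.ne_iff.1 hx
  rw [lapMatrix_mulVec_apply_eq_sum_sub] at ha
  obtain ⟨b, hb, hab⟩ := Finset.exists_ne_zero_of_sum_ne_zero ha
  rw [mem_neighborFinset] at hb
  obtain ⟨⟨u, v⟩, huv, hmax⟩ := Finset.exists_max_image
    (Finset.univ.filter fun p : V × V => G.Adj p.1 p.2) (fun p => x p.1 - x p.2)
    ⟨(a, b), by simpa using hb⟩
  simp only [Finset.mem_filter, Finset.mem_univ, true_and, Prod.forall] at huv hmax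
  refine ⟨u, v, huv, ?_, hmax⟩
  rcases (sub_ne_zero.1 hab).lt_or_gt with hlt | hlt
  · exact sub_pos.1 ((sub_pos.2 hlt).trans_le (hmax b a hb.symm))
  · exact sub_pos.1 ((sub_pos.2 hlt).trans_le (hmax a b hb))

theorem eigenvalue_le_card_union (h : IsSteepestEdge G x u v) {μ : R}
    (hx : G.lapMatrix R *ᵥ x = μ • x) :
    μ ≤ (G.neighborFinset u ∪ G.neighborFinset v).card := by
  have hslack := add_nonneg h.sum_sdiff_sub_right_nonneg h.sum_sdiff_left_sub_nonneg
  rw [← card_sub_eigenvalue_mul_sub hx] at hslack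
  exact sub_nonneg.1 (nonneg_of_mul_nonneg_left hslack (sub_pos.2 h.lt))

theorem apply_eq_right_of_card_union_le (h : IsSteepestEdge G x u v) {μ : R}
    (hx : G.lapMatrix R *ᵥ x = μ • x)
    (hμ : (G.neighborFinset u ∪ G.neighborFinset v).card ≤ μ) {y : V}
    (huy : G.Adj u y) (hvy : ¬G.Adj v y) : x y = x v := by
  refine (sub_nonpos.1 ?_).antisymm (h.apply_right_le huy)
  calc x y - x v ≤ ∑ z ∈ G.neighborFinset u \ G.neighborFinset v, (x z - x v) := by
        refine Finset.single_le_sum (f := fun z => x z - x v) (fun z hz => ?_) (by simp [huy, hvy])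
        rw [Finset.mem_sdiff, mem_neighborFinset] at hz
        exact sub_nonneg.2 (h.apply_right_le hz.1)
    _ ≤ (((G.neighborFinset u ∪ G.neighborFinset v).card : R) - μ) * (x u - x v) := by
        rw [card_sub_eigenvalue_mul_sub hx]
        exact le_add_of_nonneg_right h.sum_sdiff_left_sub_nonneg
    _ ≤ 0 := mul_nonpos_of_nonpos_of_nonneg (sub_nonpos.2 hμ) (sub_pos.2 h.lt).le

variable (hx : G.lapMatrix R *ᵥ x = ((Fintype.card V : R) - dominationNumber G + 2) • x)
include hx

theorem card_commonNonneighborFinset_add_two (h : IsSteepestEdge G x u v) :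
    (commonNonneighborFinset G u v).card + 2 = dominationNumber G := by
  refine le_antisymm ?_ (dominationNumber_le_card_commonNonneighborFinset_add_two u v)
  have hμ := h.eigenvalue_le_card_union hx
  rw [← card_union_add_card_commonNonneighborFinset (G := G) u v] at hμ
  push_cast at hμ
  have hcard : ((commonNonneighborFinset G u v).card : R) + 2 ≤ dominationNumber G := by
    linarith
  exact_mod_cast hcard

theorem apply_eq_right (h : IsSteepestEdge G x u v) {y : V} (huy : G.Adj u y)
    (hvy : ¬G.Adj v y) : x y = x v := by
  refine h.apply_eq_right_of_card_union_le hx ?_ huy hvy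
  rw [← h.card_commonNonneighborFinset_add_two hx,
    ← card_union_add_card_commonNonneighborFinset (G := G) u v]
  push_cast
  linarith

theorem apply_eq_left (h : IsSteepestEdge G x u v) {y : V} (hvy : G.Adj v y)
    (huy : ¬G.Adj u y) : x y = x u :=
  neg_injective (h.neg.apply_eq_right (lapMatrix_mulVec_neg_eq_smul_neg hx) hvy huy)

variable {r w : V}

theorem apply_eq_left_of_adj_of_adj (h : IsSteepestEdge G x u v)
    (hr : r ∈ commonNonneighborFinset G u v) (hwr : G.Adj w r) (hvw : G.Adj v w) :
    x w = x u := by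
  obtain ⟨b, hvb, hub, hwb⟩ :=
    exists_adj_not_adj_not_adj (h.card_commonNonneighborFinset_add_two hx).le hr hwr
  have hxb : x b = x u := h.apply_eq_left hx hvb hub
  have hbv : IsSteepestEdge G x b v := h.congr hvb.symm hxb rfl
  exact (hbv.apply_eq_left hx hvw fun hbw => hwb hbw.symm).trans hxb

theorem not_adj_of_adj_of_adj (h : IsSteepestEdge G x u v)
    (hr : r ∈ commonNonneighborFinset G u v) (huw : G.Adj u w) (hvw : G.Adj v w) :
    ¬G.Adj w r := by
  intro hwr
  have hwu : x w = x u := h.apply_eq_left_of_adj_of_adj hx hr hwr hvw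
  have hwv : x w = x v := by
    rw [commonNonneighborFinset_comm] at hr
    exact neg_injective
      (h.neg.apply_eq_left_of_adj_of_adj (lapMatrix_mulVec_neg_eq_smul_neg hx) hr hwr huw)
  exact h.lt.ne (hwv.symm.trans hwu)

theorem not_adj_of_adj_of_not_adj (h : IsSteepestEdge G x u v)
    (hr : r ∈ commonNonneighborFinset G u v) (huw : G.Adj u w) (hvw : ¬G.Adj v w) :
    ¬G.Adj w r := by
  intro hwr
  obtain ⟨hur, hvr⟩ := mem_commonNonneighborFinset.1 hr
  obtain ⟨b, hvb, hub, hwb⟩ :=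
    exists_adj_not_adj_not_adj (h.card_commonNonneighborFinset_add_two hx).le hr hwr
  have hxw : x w = x v := h.apply_eq_right hx huw hvw
  have huw_steepest : IsSteepestEdge G x u w := h.congr huw rfl hxw
  have hxr : x r = x u := huw_steepest.apply_eq_left hx hwr hur
  have hrw : IsSteepestEdge G x r w := h.congr hwr.symm hxr hxw
  by_cases hrb : G.Adj r b
  · have hbu : x b = x u := h.apply_eq_left hx hvb hub
    have hbw : x b = x w := hrw.apply_eq_right hx hrb hwb
    exact huw_steepest.lt.ne (hbw.symm.trans hbu)
  · refine not_adj_of_mem_commonNonneighborFinset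
      (hrw.card_commonNonneighborFinset_add_two hx).le ?_ ?_ hvb
    · exact mem_commonNonneighborFinset.2 ⟨fun hrv => hvr hrv.symm, fun hwv => hvw hwv.symm⟩
    · exact mem_commonNonneighborFinset.2 ⟨hrb, hwb⟩

theorem isIsolated_of_mem_commonNonneighborFinset (h : IsSteepestEdge G x u v)
    (hr : r ∈ commonNonneighborFinset G u v) : G.IsIsolated r := by
  intro w hrw
  have hwr := hrw.symm
  by_cases huw : G.Adj u w <;> by_cases hvw : G.Adj v w
  · exact h.not_adj_of_adj_of_adj hx hr huw hvw hwr
  · exact h.not_adj_of_adj_of_not_adj hx hr huw hvw hwr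
  · exact h.neg.not_adj_of_adj_of_not_adj (lapMatrix_mulVec_neg_eq_smul_neg hx)
      (commonNonneighborFinset_comm (G := G) u v ▸ hr) hvw huw hwr
  · exact not_adj_of_mem_commonNonneighborFinset
      (h.card_commonNonneighborFinset_add_two hx).le hr
      (mem_commonNonneighborFinset.2 ⟨huw, hvw⟩) hrw

end IsSteepestEdge

theorem isolated_vertices_of_laplacian_spectral_radius_eq
    {V : Type*} [Fintype V] [DecidableEq V] (G : SimpleGraph V) [DecidableRel G.Adj]
    (n γ : ℕ) (hn : Fintype.card V = n) (hγ : dominationNumber G = γ)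
    (hγ2 : 2 ≤ γ) (hγn : γ ≤ n - 1)
    (hrad : Module.End.HasEigenvalue (Matrix.toLin' (G.lapMatrix ℝ)) ((n : ℝ) - γ + 2)) :
    γ - 2 ≤ (Finset.univ.filter fun v : V => G.degree v = 0).card := by
  subst hn hγ
  obtain ⟨x, hx⟩ := hrad.exists_hasEigenvector
  have hLx : G.lapMatrix ℝ *ᵥ x = ((Fintype.card V : ℝ) - dominationNumber G + 2) • x := by
    simpa only [toLin'_apply] using hx.apply_eq_smul
  have hμ : (Fintype.card V : ℝ) - dominationNumber G + 2 ≠ 0 := by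
    have hγ_le : (dominationNumber G : ℝ) ≤ Fintype.card V := by
      exact_mod_cast hγn.trans (Nat.sub_le _ _)
    linarith
  obtain ⟨u, v, huv⟩ :=
    IsSteepestEdge.exists_of_lapMatrix_mulVec_ne_zero (hLx ▸ smul_ne_zero hμ hx.2)
  rw [← huv.card_commonNonneighborFinset_add_two hLx, Nat.add_sub_cancel]
  refine Finset.card_le_card fun r hr => ?_
  have hr_isolated := huv.isIsolated_of_mem_commonNonneighborFinset hLx hr
  simpa [← card_neighborFinset_eq_degree, Finset.eq_empty_iff_forall_notMem, IsIsolated]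
    using hr_isolated
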